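/- arXiv:1810.09005 — 3 statements merged into one kernel-verified Lean document; each statement's English description precedes it below -/
import Mathlib

section
/- There exists an optimal schedule B1 such that for every mini-batch b ∈ B1, the rightmost file of b does not belong to F(b') for any mini-batch b' ∈ B1 with l(b') > l(b); that is, the rightmost file of every mini-batch is traversed (read left to right) for the first time when that mini-batch is executed. -/
/-!
The proof is an exchange argument. Suppose `b = (x, y)` and `b'` belong to a schedule `B`, that `b'`
starts strictly to the right of `b`, and that `b'` contains the rightmost file `y` of `b`. Then
`x < y`, and `b` can be replaced by `(x, y - 1)` (`shrink`). No response time increases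
(`resp_shrink_le`): the execution order is unaffected, the detours only get shorter, and `y` is
already read by `b'`, which is executed earlier. The total length of the detours strictly decreases
(`sum_shrink_lt`). Hence an optimal schedule whose total detour length is minimal among all optimal
schedules contains no such pair.
-/

open Finset

namespace LTSP

variable (N : ℕ) (s : Fin N → ℕ) (n : Fin N → ℕ)

/-- Left edge (0-based coordinate) of file `f`: file `f` occupies the blocks
`leftPos f + 1, …, leftPos f + s f` of the tape. -/
def leftPos (f : Fin N) : ℕ := ∑ j ∈ Finset.Iio f, s j

/-- Leftmost block of file `f`: `l(f) = 1 + ∑_{j<f} s j`. -/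
def lB (f : Fin N) : ℕ := 1 + leftPos N s f

/-- Tape length `m = ∑ s f`. -/
def tapeLen : ℕ := ∑ j, s j

/-- Left edge `l(b)` (0-based coordinate) of a mini-batch `b = (b.1, b.2)`. -/
def Lb (b : Fin N × Fin N) : ℕ := leftPos N s b.1

/-- Right edge of a mini-batch; numerically this equals its rightmost block `r(b)`. -/
def Rb (b : Fin N × Fin N) : ℕ := leftPos N s b.2 + s b.2

/-- Size of a mini-batch: `s(b) = r(b) - l(b) + 1`. -/
def sb (b : Fin N × Fin N) : ℕ := Rb N s b - Lb N s b

/-- `f ∈ F(b)` : file `f` is contained in the mini-batch `b`. -/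
def Covers (b : Fin N × Fin N) (f : Fin N) : Prop := b.1 ≤ f ∧ f ≤ b.2

/-- `f ∈ F(B)` : file `f` is traversed by some mini-batch of the schedule `B`. -/
def InF (B : Finset (Fin N × Fin N)) (f : Fin N) : Prop := ∃ b ∈ B, Covers N b f

/-- A schedule is a finite set of mini-batches, i.e. pairs `(f, f')` with `f ≤ f'`. -/
def Valid (B : Finset (Fin N × Fin N)) : Prop := ∀ b ∈ B, b.1 ≤ b.2

/-- `b'` is executed strictly before `b`: mini-batches are executed in decreasing order
of their leftmost blocks, ties broken by executing larger mini-batches first. -/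
def ExecBefore (b' b : Fin N × Fin N) : Prop :=
  Lb N s b < Lb N s b' ∨ (Lb N s b' = Lb N s b ∧ Rb N s b < Rb N s b')

open scoped Classical in
/-- Time step at which the read movement of mini-batch `b ∈ B` begins: the head starts at
position `m` at time `0`, moves left one block per time step, and detours `2 s(b')` time
steps for every mini-batch `b'` executed before `b`. -/
noncomputable def startTime (B : Finset (Fin N × Fin N)) (b : Fin N × Fin N) : ℕ :=
  (tapeLen N s - Lb N s b) + 2 * ∑ b' ∈ B.filter (fun b' => ExecBefore N s b' b), sb N s b'

/-- Time step at which the left-to-right traversal of file `f` within the read movement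
of mini-batch `b` begins. -/
noncomputable def travTime (B : Finset (Fin N × Fin N)) (f : Fin N) (b : Fin N × Fin N) : ℕ :=
  startTime N s B b + (leftPos N s f - Lb N s b)

/-- Time step at which Phase 2 begins (the head has descended the whole tape, detouring
`2 s(b)` time steps for each executed mini-batch). -/
noncomputable def phase2Start (B : Finset (Fin N × Fin N)) : ℕ :=
  tapeLen N s + 2 * ∑ b ∈ B, sb N s b

open scoped Classical in
/-- Response time of the requests of file `f` under schedule `B`: the time step at which the
first complete left-to-right traversal of `f` begins (within the first mini-batch of `B`
containing `f` if one exists, and during Phase 2 otherwise). -/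
noncomputable def resp (B : Finset (Fin N × Fin N)) (f : Fin N) : ℕ :=
  if h : (B.filter (fun b => Covers N b f)).Nonempty then
    (B.filter (fun b => Covers N b f)).inf' h (travTime N s B f)
  else phase2Start N s B + leftPos N s f

/-- Objective value of a schedule: the sum of the response times of all requests
(file `f` contributes `n f` times its response time). -/
noncomputable def v (B : Finset (Fin N × Fin N)) : ℕ :=
  ∑ f, n f * resp N s B f

/-- A schedule is optimal if its objective value is minimum among all schedules. -/
def Optimal (B : Finset (Fin N × Fin N)) : Prop :=
  Valid N B ∧ ∀ B' : Finset (Fin N × Fin N), Valid N B' → v N s n B ≤ v N s n B'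

open scoped Classical in
/-- Left-hand side of Inequalities (1)/(2): `n(f)·(l(f) + ∑_{b ∈ B, r(b) < l(f)} s(b))`. -/
noncomputable def ineqLHS (B : Finset (Fin N × Fin N)) (f : Fin N) : ℕ :=
  n f * (lB N s f + ∑ b ∈ B.filter (fun b => Rb N s b < lB N s f), sb N s b)

open scoped Classical in
/-- Right-hand side of Inequalities (1)/(2):
`s(f)·(∑_{f', l(f') < l(f)} n(f') + ∑_{f' ∉ F(B), l(f') > l(f)} n(f'))`. -/
noncomputable def ineqRHS (B : Finset (Fin N × Fin N)) (f : Fin N) : ℕ :=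
  s f * ((∑ f' ∈ Finset.univ.filter (fun f' => lB N s f' < lB N s f), n f') +
    ∑ f' ∈ Finset.univ.filter (fun f' => ¬ InF N B f' ∧ lB N s f < lB N s f'), n f')

/-- Inequality (1). -/
def Ineq1 (B : Finset (Fin N × Fin N)) (f : Fin N) : Prop :=
  ineqRHS N s n B f < ineqLHS N s n B f

/-- Inequality (2). -/
def Ineq2 (B : Finset (Fin N × Fin N)) (f : Fin N) : Prop :=
  ineqLHS N s n B f < ineqRHS N s n B f

/-- The Greedy Strategy schedule: one atomic mini-batch `(f, f)` for every file with at
least one request, except the leftmost file of the tape. -/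
def GS (hN : 0 < N) : Finset (Fin N × Fin N) :=
  (Finset.univ.filter (fun f : Fin N => 0 < n f ∧ f ≠ ⟨0, hN⟩)).image (fun f => (f, f))

section Exchange

variable {N : ℕ} {s : Fin N → ℕ}

lemma leftPos_add_le {f g : Fin N} (h : f < g) : leftPos N s f + s f ≤ leftPos N s g := by
  unfold leftPos
  rw [add_comm, ← Finset.sum_insert (by simp : f ∉ Finset.Iio f)]
  apply Finset.sum_le_sum_of_subset
  intro a ha
  simp only [Finset.mem_insert, Finset.mem_Iio] at ha ⊢
  rcases ha with rfl | ha
  · exact h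
  · exact ha.trans h

lemma leftPos_strictMono (hs : ∀ f, 1 ≤ s f) : StrictMono (leftPos N s) := by
  intro f g h
  have h1 := leftPos_add_le (s := s) h
  have h2 := hs f
  omega

lemma rightPos_strictMono (hs : ∀ f, 1 ≤ s f) :
    StrictMono (fun f => leftPos N s f + s f) := by
  intro f g h
  have h1 := leftPos_add_le (s := s) h
  have h2 := hs g
  change leftPos N s f + s f < leftPos N s g + s g
  omega

/-- The schedule `B` with the mini-batch `b` replaced by `e`; if `e` already belongs to `B`, this
just removes `b`. -/
def shrink (B : Finset (Fin N × Fin N)) (b e : Fin N × Fin N) : Finset (Fin N × Fin N) :=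
  insert e (B.erase b)

lemma sum_shrink_le {B : Finset (Fin N × Fin N)} {b : Fin N × Fin N} (e : Fin N × Fin N)
    (hb : b ∈ B) (g g' : Fin N × Fin N → ℕ) (he : g' e ≤ g b)
    (h : ∀ a ∈ B, a ≠ b → g' a ≤ g a) :
    ∑ a ∈ shrink B b e, g' a ≤ ∑ a ∈ B, g a := by
  rw [← Finset.add_sum_erase B g hb]
  have h1 : ∑ a ∈ B.erase b, g' a ≤ ∑ a ∈ B.erase b, g a :=
    Finset.sum_le_sum fun a ha => h a (Finset.mem_of_mem_erase ha) (Finset.ne_of_mem_erase ha)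
  by_cases hm : e ∈ B.erase b
  · rw [shrink, Finset.insert_eq_of_mem hm]
    omega
  · rw [shrink, Finset.sum_insert hm]
    omega

lemma sum_shrink_lt {B : Finset (Fin N × Fin N)} {b e : Fin N × Fin N}
    (hb : b ∈ B) (g : Fin N × Fin N → ℕ) (he : g e < g b) :
    ∑ a ∈ shrink B b e, g a < ∑ a ∈ B, g a := by
  rw [← Finset.add_sum_erase B g hb]
  by_cases hm : e ∈ B.erase b
  · rw [shrink, Finset.insert_eq_of_mem hm]
    omega
  · rw [shrink, Finset.sum_insert hm]
    omega

/-- To compare response times it suffices to compare the start of Phase 2 and, for each traversal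
of a file in the old schedule, exhibit a traversal in the new one that is no later, provided
no file is newly covered. -/
lemma resp_le_of {B B' : Finset (Fin N × Fin N)} {f : Fin N}
    (hP : phase2Start N s B' ≤ phase2Start N s B)
    (hnew : ∀ c ∈ B', Covers N c f → ∃ d ∈ B, Covers N d f)
    (hold : ∀ c ∈ B, Covers N c f →
      ∃ d ∈ B', Covers N d f ∧ travTime N s B' f d ≤ travTime N s B f c) :
    resp N s B' f ≤ resp N s B f := by
  classical
  by_cases hB : ∃ c ∈ B, Covers N c f
  · obtain ⟨c, hc, hcf⟩ := hB
    obtain ⟨d, hd, hdf, -⟩ := hold c hc hcf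
    have h1 : (B.filter (fun b => Covers N b f)).Nonempty := ⟨c, Finset.mem_filter.2 ⟨hc, hcf⟩⟩
    have h2 : (B'.filter (fun b => Covers N b f)).Nonempty := ⟨d, Finset.mem_filter.2 ⟨hd, hdf⟩⟩
    unfold resp
    rw [dif_pos h2, dif_pos h1]
    apply Finset.le_inf'
    intro c' hc'
    rw [Finset.mem_filter] at hc'
    obtain ⟨d', hd', hdf', hle⟩ := hold c' hc'.1 hc'.2
    exact (Finset.inf'_le _ (Finset.mem_filter.2 ⟨hd', hdf'⟩)).trans hle
  · have h1 : ¬ (B.filter (fun b => Covers N b f)).Nonempty := by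
      rintro ⟨c, hc⟩
      rw [Finset.mem_filter] at hc
      exact hB ⟨c, hc⟩
    have h2 : ¬ (B'.filter (fun b => Covers N b f)).Nonempty := by
      rintro ⟨c, hc⟩
      rw [Finset.mem_filter] at hc
      exact hB (hnew c hc.1 hc.2)
    unfold resp
    rw [dif_neg h2, dif_neg h1]
    omega

/-- Bounds a start time after the exchange by one before it: each detour before `c'` in the
new schedule is matched with a detour before `c` in the old one that is at least as long. -/
lemma startTime_shrink_le {B : Finset (Fin N × Fin N)} {b e c c' : Fin N × Fin N} (hb : b ∈ B)
    (hL : Lb N s c' = Lb N s c) (hsb : sb N s e ≤ sb N s b)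
    (he : ExecBefore N s e c' → ExecBefore N s b c)
    (h : ∀ a ∈ B, a ≠ b → ExecBefore N s a c' → ExecBefore N s a c) :
    startTime N s (shrink B b e) c' ≤ startTime N s B c := by
  classical
  unfold startTime
  rw [hL, Finset.sum_filter, Finset.sum_filter]
  have := sum_shrink_le e hb (fun a => if ExecBefore N s a c then sb N s a else 0)
    (fun a => if ExecBefore N s a c' then sb N s a else 0)
    (by
      by_cases h1 : ExecBefore N s e c'
      · simpa [h1, he h1] using hsb
      · simp [h1])
    (by
      intro a ha hab
      by_cases h1 : ExecBefore N s a c'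
      · simp [h1, h a ha hab h1]
      · simp [h1])
  gcongr

/-- A file contained in two mini-batches is read no later in the one that starts
further right than in the other. -/
lemma travTime_le_of_Lb_lt {B : Finset (Fin N × Fin N)} {b b' : Fin N × Fin N} (f : Fin N)
    (hlt : Lb N s b < Lb N s b') : travTime N s B f b' ≤ travTime N s B f b := by
  classical
  have : ∑ a ∈ B.filter (fun a => ExecBefore N s a b'), sb N s a ≤
      ∑ a ∈ B.filter (fun a => ExecBefore N s a b), sb N s a := by
    apply Finset.sum_le_sum_of_subset
    intro a ha
    rw [Finset.mem_filter] at ha ⊢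
    refine ⟨ha.1, Or.inl ?_⟩
    rcases ha.2 with h | h <;> omega
  unfold travTime startTime
  gcongr

lemma resp_shrink_le (hs : ∀ f, 1 ≤ s f) {B : Finset (Fin N × Fin N)}
    {b b' : Fin N × Fin N} {z : Fin N} (hb : b ∈ B) (hb' : b' ∈ B)
    (hlt : Lb N s b < Lb N s b') (hcov : Covers N b' b.2) (hz : (z : ℕ) + 1 = b.2) (f : Fin N) :
    resp N s (shrink B b (b.1, z)) f ≤ resp N s B f := by
  classical
  have hzlt : z < b.2 := by rw [Fin.lt_def]; omega
  have hR : Rb N s (b.1, z) < Rb N s b := rightPos_strictMono hs hzlt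
  have hL : Lb N s (b.1, z) = Lb N s b := rfl
  have hsb : sb N s (b.1, z) ≤ sb N s b := by unfold sb; omega
  have hkeep : ∀ c ∈ B, c ≠ b → c ∈ shrink B b (b.1, z) := fun c hc hne =>
    Finset.mem_insert_of_mem (Finset.mem_erase.2 ⟨hne, hc⟩)
  have htrav : ∀ c, travTime N s (shrink B b (b.1, z)) f c ≤ travTime N s B f c := by
    intro c
    refine Nat.add_le_add_right (startTime_shrink_le hb rfl hsb ?_ fun _ _ _ h => h) _
    rintro (h | h)
    · exact Or.inl (by omega)
    · exact Or.inr (by omega)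
  apply resp_le_of
  · have := sum_shrink_le (b.1, z) hb (sb N s) (sb N s) hsb fun _ _ _ => le_rfl
    unfold phase2Start
    omega
  · intro c hc hcf
    rcases Finset.mem_insert.1 hc with rfl | hc
    · exact ⟨b, hb, hcf.1, hcf.2.trans hzlt.le⟩
    · exact ⟨c, Finset.mem_of_mem_erase hc, hcf⟩
  · intro c hc hcf
    by_cases hcb : c = b
    · subst hcb
      by_cases hf : f = c.2
      · subst hf
        have hne : b' ≠ c := by rintro rfl; exact lt_irrefl _ hlt
        exact ⟨b', hkeep b' hb' hne, hcov, (htrav b').trans (travTime_le_of_Lb_lt _ hlt)⟩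
      · have hfz : f ≤ z := by
          have h1 := lt_of_le_of_ne hcf.2 hf
          rw [Fin.lt_def] at h1
          rw [Fin.le_def]
          omega
        refine ⟨(c.1, z), Finset.mem_insert_self _ _, ⟨hcf.1, hfz⟩, ?_⟩
        refine Nat.add_le_add_right (startTime_shrink_le hb hL hsb ?_ ?_) _
        · rintro (h | h) <;> omega
        · rintro a ha hac (h | ⟨h1, h2⟩)
          · exact Or.inl h
          -- no mini-batch other than `c` fits, in the execution order, between `c` and `(c.1, z)`
          · refine Or.inr ⟨h1, ?_⟩
            have e1 : a.1 = c.1 := (leftPos_strictMono hs).injective h1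
            have h3 : z < a.2 := (rightPos_strictMono hs).lt_iff_lt.1 h2
            have e2 : a.2 ≠ c.2 := fun e2 => hac (Prod.ext e1 e2)
            have h4 : c.2 < a.2 := by
              refine lt_of_le_of_ne ?_ e2.symm
              rw [Fin.lt_def] at h3
              rw [Fin.le_def]
              omega
            exact rightPos_strictMono hs h4
    · exact ⟨c, hkeep c hc hcb, hcf, htrav c⟩

lemma exists_optimal (n : Fin N → ℕ) : ∃ B, Optimal N s n B := by
  classical
  obtain ⟨B, hB, hmin⟩ := Finset.exists_min_image
    (Finset.univ.filter (fun B : Finset (Fin N × Fin N) => Valid N B)) (v N s n)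
    ⟨∅, by simp [Valid]⟩
  simp only [Finset.mem_filter, Finset.mem_univ, true_and] at hB hmin
  exact ⟨B, hB, hmin⟩

end Exchange

/-- There exists an optimal schedule in which the rightmost file of every mini-batch is
traversed for the first time when that mini-batch is executed: it does not belong to `F(b')`
for any mini-batch `b'` of the schedule with `l(b') > l(b)`. -/
theorem stmt4 (hs : ∀ f, 1 ≤ s f) :
    ∃ B : Finset (Fin N × Fin N), Optimal N s n B ∧
      ∀ b ∈ B, ∀ b' ∈ B, Lb N s b < Lb N s b' → ¬ Covers N b' b.2 := by
  classical
  obtain ⟨B, hB, hmin⟩ := Finset.exists_min_image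
    (Finset.univ.filter (fun B : Finset (Fin N × Fin N) => Optimal N s n B))
    (fun B => ∑ b ∈ B, sb N s b)
    (by obtain ⟨B, hB⟩ := exists_optimal (s := s) n; exact ⟨B, by simpa using hB⟩)
  simp only [Finset.mem_filter, Finset.mem_univ, true_and] at hB hmin
  refine ⟨B, hB, fun b hb b' hb' hlt hcov => ?_⟩
  have hx : b.1 < b.2 := ((leftPos_strictMono hs).lt_iff_lt.1 hlt).trans_le hcov.1
  have hx' := Fin.lt_def.1 hx
  obtain ⟨z, hz⟩ : ∃ z : Fin N, (z : ℕ) + 1 = b.2 :=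
    ⟨⟨b.2 - 1, by omega⟩, by simp only; omega⟩
  have hzlt : z < b.2 := by rw [Fin.lt_def]; omega
  have hR : Rb N s (b.1, z) < Rb N s b := rightPos_strictMono hs hzlt
  have hL : Lb N s (b.1, z) = Lb N s b := rfl
  have hLR : Lb N s b < Rb N s b := by
    have := leftPos_strictMono hs hx
    unfold Lb Rb
    omega
  have hopt : Optimal N s n (shrink B b (b.1, z)) := by
    refine ⟨?_, fun B' hB' => le_trans ?_ (hB.2 B' hB')⟩
    · intro c hc
      rcases Finset.mem_insert.1 hc with rfl | hc
      · change b.1 ≤ z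
        rw [Fin.le_def]
        omega
      · exact hB.1 c (Finset.mem_of_mem_erase hc)
    · exact Finset.sum_le_sum fun f _ =>
        Nat.mul_le_mul_left _ (resp_shrink_le hs hb hb' hlt hcov hz f)
  have h1 := hmin _ hopt
  have h2 := sum_shrink_lt (e := (b.1, z)) hb (sb N s) (by unfold sb; omega)
  exact absurd h2 (not_lt.2 h1)

end LTSP
end

section
/- The Greedy Strategy is a 3-approximation for LTSP: for every LTSP instance and every schedule B1, v(B1^GS) ≤ 3 · v(B1), where B1^GS is the Greedy Strategy schedule. -/
/-!
The bound holds file by file. In any schedule `B` the head has to reach the left edge of `f`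
before it can traverse `f` from left to right, so `f` has response time at least
`m - leftPos f` (`le_resp`). Under the Greedy Strategy the detours made before `f` is read are
round trips over pairwise distinct single files: for `f` with an atomic mini-batch these files
are not to the left of `f`, so the detours cost at most `2 * (m - leftPos f)` on top of the
direct descent `m - leftPos f` (`resp_GS_of_mem`); for the leftmost file, read in Phase 2,
they cost at most `2 * m` on top of `m` (`resp_GS_zero`). Files without requests contribute nothing.
-/

open Finset

namespace LTSP

variable (N : ℕ) (s : Fin N → ℕ) (n : Fin N → ℕ)

theorem leftPos_mono {f g : Fin N} (h : f ≤ g) : leftPos N s f ≤ leftPos N s g :=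
  Finset.sum_le_sum_of_subset (Finset.Iio_subset_Iio h)

theorem leftPos_lt (hs : ∀ f, 1 ≤ s f) {f g : Fin N} (h : f < g) :
    leftPos N s f < leftPos N s g := by
  refine Finset.sum_lt_sum_of_subset (Finset.Iio_subset_Iio h.le) (i := f) ?_ ?_ (hs f) ?_
  · simpa using h
  · simp
  · simp

theorem leftPos_add_sum_Ici (f : Fin N) :
    leftPos N s f + ∑ j ∈ Finset.Ici f, s j = tapeLen N s := by
  have hd : Disjoint (Finset.Iio f) (Finset.Ici f) := by
    rw [Finset.disjoint_left]
    intro a ha hb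
    exact absurd (Finset.mem_Ici.1 hb) (not_le.2 (Finset.mem_Iio.1 ha))
  have hu : Finset.Iio f ∪ Finset.Ici f = Finset.univ := by
    ext a
    simpa using lt_or_ge a f
  rw [leftPos, tapeLen, ← Finset.sum_union hd, hu]

theorem sb_diag (f : Fin N) : sb N s (f, f) = s f := by
  simp [sb, Rb, Lb]

theorem sum_sb_le_of_subset_diag {B : Finset (Fin N × Fin N)} {A : Finset (Fin N)}
    (h : B ⊆ A.image (fun f => (f, f))) : ∑ b ∈ B, sb N s b ≤ ∑ f ∈ A, s f := by
  refine (Finset.sum_le_sum_of_subset h).trans (le_of_eq ?_)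
  rw [Finset.sum_image (fun a _ b _ hab => congrArg Prod.fst hab)]
  exact Finset.sum_congr rfl fun f _ => sb_diag N s f

theorem le_resp (B : Finset (Fin N × Fin N)) (f : Fin N) :
    tapeLen N s - leftPos N s f ≤ resp N s B f := by
  classical
  unfold resp
  split_ifs with h
  · refine Finset.le_inf' _ _ fun b hb => ?_
    have hc : Lb N s b ≤ leftPos N s f := leftPos_mono N s (Finset.mem_filter.1 hb).2.1
    unfold travTime startTime
    omega
  · unfold phase2Start
    omega

theorem resp_GS_of_mem (hN : 0 < N) (hs : ∀ f, 1 ≤ s f) {f : Fin N}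
    (hf : (f, f) ∈ GS N n hN) :
    resp N s (GS N n hN) f ≤ 3 * (tapeLen N s - leftPos N s f) := by
  classical
  have hmem : (f, f) ∈ (GS N n hN).filter (fun b => Covers N b f) :=
    Finset.mem_filter.2 ⟨hf, le_rfl, le_rfl⟩
  have htrav : travTime N s (GS N n hN) f (f, f) ≤ 3 * (tapeLen N s - leftPos N s f) := by
    have hsum := sum_sb_le_of_subset_diag N s
      (B := (GS N n hN).filter (fun b' => ExecBefore N s b' (f, f))) (A := Finset.Ici f) (by
        intro b hb
        obtain ⟨hb, he⟩ := Finset.mem_filter.1 hb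
        obtain ⟨g, -, rfl⟩ := Finset.mem_image.1 hb
        refine Finset.mem_image.2 ⟨g, Finset.mem_Ici.2 ?_, rfl⟩
        by_contra hlt
        have := leftPos_lt N s hs (not_le.1 hlt)
        simp only [ExecBefore, Lb] at he
        omega)
    have htot := leftPos_add_sum_Ici N s f
    have hL : Lb N s (f, f) = leftPos N s f := rfl
    unfold travTime startTime
    rw [hL]
    omega
  unfold resp
  split_ifs with h
  · exact (Finset.inf'_le _ hmem).trans htrav
  · exact absurd ⟨_, hmem⟩ h

theorem resp_GS_zero (hN : 0 < N) :
    resp N s (GS N n hN) ⟨0, hN⟩ ≤ 3 * (tapeLen N s - leftPos N s ⟨0, hN⟩) := by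
  classical
  have hl : leftPos N s ⟨0, hN⟩ = 0 := by
    refine Finset.sum_eq_zero fun j hj => ?_
    exact absurd (Finset.mem_Iio.1 hj) (Nat.not_lt_zero j.1)
  have hsum : ∑ b ∈ GS N n hN, sb N s b ≤ tapeLen N s :=
    sum_sb_le_of_subset_diag N s (Finset.image_subset_image (Finset.subset_univ _))
  unfold resp
  split_ifs with h
  · -- No mini-batch of the Greedy Strategy covers the leftmost file.
    obtain ⟨b, hb⟩ := h
    obtain ⟨hb, hc⟩ := Finset.mem_filter.1 hb
    obtain ⟨g, hg, rfl⟩ := Finset.mem_image.1 hb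
    exact absurd (le_antisymm hc.1 hc.2) (Finset.mem_filter.1 hg).2.2
  · unfold phase2Start
    omega

/-- The Greedy Strategy is a 3-approximation for LTSP: for every schedule `B1`,
`v(B1^GS) ≤ 3 · v(B1)`. -/
theorem stmt9 (hN : 0 < N) (hs : ∀ f, 1 ≤ s f)
    (B1 : Finset (Fin N × Fin N)) (hB : Valid N B1) :
    v N s n (GS N n hN) ≤ 3 * v N s n B1 := by
  unfold v
  rw [Finset.mul_sum]
  refine Finset.sum_le_sum fun f _ => ?_
  have hlow := le_resp N s B1 f
  rcases Nat.eq_zero_or_pos (n f) with h0 | hpos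
  · simp [h0]
  have hup : resp N s (GS N n hN) f ≤ 3 * (tapeLen N s - leftPos N s f) := by
    by_cases hf : f = ⟨0, hN⟩
    · rw [hf]
      exact resp_GS_zero N s n hN
    · refine resp_GS_of_mem N s n hN hs (Finset.mem_image.2 ⟨f, ?_, rfl⟩)
      exact Finset.mem_filter.2 ⟨Finset.mem_univ f, hpos, hf⟩
  calc n f * resp N s (GS N n hN) f ≤ n f * (3 * resp N s B1 f) :=
        Nat.mul_le_mul_left _ (by omega)
    _ = 3 * (n f * resp N s B1 f) := by ring

end LTSP
end

section
/- Assume s(f) = k for some fixed k ∈ ℕ, k ≥ 1, and n(f) = 1 for every file f. If B1 is an optimal schedule consisting solely of atomic mini-batches and b is the mini-batch of B1 with the smallest leftmost block, then v(B1 ∖ {b}) = v(B1). -/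
/-! Write `b = (f, f)`, and count positions in files. Deleting `b` changes response times as follows.

* Files served by other mini-batches are not delayed.
* Files outside the schedule are served in Phase 2, which now begins `2 k` time steps earlier.
  In particular this holds for the `f` files to the left of `f`, as `b` is the leftmost mini-batch.
* The file `f` itself was served last in Phase 1, and is now served in Phase 2. The head walks
  from `f` to the left end and back instead of serving `f` at once, a delay of `2 k f`.

The gain of at least `2 k` on each of the `f` files left of `f` pays for this delay, so the
objective value does not increase, and by optimality it does not decrease. The comparison is
made file by file (`resp_erase_add_le`) and then summed. -/

open Finset

namespace LTSP

variable (N : ℕ) (s : Fin N → ℕ) (n : Fin N → ℕ)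

theorem leftPos_eq (k : ℕ) (hs : ∀ f, s f = k) (f : Fin N) : leftPos N s f = f * k := by
  simp [leftPos, hs]

theorem sb_atomic (k : ℕ) (hs : ∀ f, s f = k) (b : Fin N × Fin N) (h : b.1 = b.2) :
    sb N s b = k := by
  simp [sb, Rb, Lb, h, hs]

/-- In an atomic schedule the only mini-batch containing `g` is `(g, g)`. -/
theorem filter_covers (B : Finset (Fin N × Fin N)) (hat : ∀ b ∈ B, b.1 = b.2) (g : Fin N)
    (b : Fin N × Fin N) (hb : b ∈ B) : Covers N b g ↔ b = (g, g) := by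
  have h := hat b hb
  obtain ⟨x, y⟩ := b
  simp only at h
  subst h
  simp only [Covers, Prod.mk.injEq, and_self]
  exact ⟨fun h => le_antisymm h.1 h.2, fun h => by subst h; simp⟩

theorem resp_mem (B : Finset (Fin N × Fin N)) (hat : ∀ b ∈ B, b.1 = b.2) (g : Fin N)
    (hg : (g, g) ∈ B) : resp N s B g = startTime N s B (g, g) := by
  classical
  have hf : B.filter (fun b => Covers N b g) = {(g, g)} := by
    ext b
    simp only [mem_filter, mem_singleton]
    constructor
    · rintro ⟨h1, h2⟩
      exact (filter_covers N B hat g b h1).1 h2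
    · rintro rfl
      exact ⟨hg, (filter_covers N B hat g _ hg).2 rfl⟩
  have hne : (B.filter (fun b => Covers N b g)).Nonempty := by rw [hf]; simp
  have hr : resp N s B g = (B.filter (fun b => Covers N b g)).inf' hne (travTime N s B g) := by
    unfold resp
    rw [dif_pos (by convert hne)]
  rw [hr]
  simp only [hf, inf'_singleton]
  simp [travTime, Lb]

theorem resp_notMem (B : Finset (Fin N × Fin N)) (hat : ∀ b ∈ B, b.1 = b.2) (g : Fin N)
    (hg : (g, g) ∉ B) : resp N s B g = phase2Start N s B + leftPos N s g := by
  classical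
  unfold resp
  rw [dif_neg]
  rintro ⟨b, hb⟩
  rw [mem_filter] at hb
  exact hg ((filter_covers N B hat g b hb.1).1 hb.2 ▸ hb.1)

/-- Effect on a single file `g` of deleting the leftmost mini-batch `(f, f)`: files left of `f`
gain at least `2 k`, the file `f` loses at most `2 k f`, and no other file loses. -/
theorem resp_erase_add_le (k : ℕ) (hk : 1 ≤ k) (hs : ∀ f, s f = k)
    (B : Finset (Fin N × Fin N)) (hat : ∀ b ∈ B, b.1 = b.2) (f : Fin N) (hb : (f, f) ∈ B)
    (hmin : ∀ b' ∈ B, Lb N s (f, f) ≤ Lb N s b') (g : Fin N) :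
    resp N s (B.erase (f, f)) g + (if g < f then 2 * k else 0) ≤
      resp N s B g + (if g = f then 2 * (f * k) else 0) := by
  classical
  have hat' : ∀ b ∈ B.erase (f, f), b.1 = b.2 := fun b h => hat b (mem_of_mem_erase h)
  have hsum : ∑ b ∈ B, sb N s b = ∑ b ∈ B.erase (f, f), sb N s b + k := by
    rw [← sum_erase_add B _ hb, sb_atomic N s k hs (f, f) rfl]
  by_cases hgf : g = f
  · subst hgf
    rw [resp_mem N s B hat g hb, resp_notMem N s _ hat' g (by simp)]
    simp only [lt_irrefl, if_false, if_true, phase2Start, startTime, Lb,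
      leftPos_eq N s k hs]
    have hle : ∑ b ∈ B.erase (g, g), sb N s b ≤
        ∑ b' ∈ B.filter (fun b' => ExecBefore N s b' (g, g)), sb N s b' := by
      apply sum_le_sum_of_subset
      intro c hc
      have hcB := mem_of_mem_erase hc
      refine mem_filter.2 ⟨hcB, Or.inl (lt_of_le_of_ne (hmin c hcB) fun he => ?_)⟩
      simp only [Lb, leftPos_eq N s k hs] at he
      have h1 : g = c.1 := Fin.ext (Nat.eq_of_mul_eq_mul_right (by omega) he)
      exact ne_of_mem_erase hc (Prod.ext h1.symm ((hat c hcB).symm.trans h1.symm))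
    have hle2 : (g : ℕ) * k ≤ tapeLen N s := by
      simp only [tapeLen, hs, sum_const, card_univ, Fintype.card_fin, smul_eq_mul]
      exact Nat.mul_le_mul_right k g.2.le
    convert_to _ ≤ tapeLen N s - g * k
      + 2 * (∑ b' ∈ B.filter (fun b' => ExecBefore N s b' (g, g)), sb N s b') + 2 * (g * k)
    omega
  · rw [if_neg hgf]
    by_cases hg : (g, g) ∈ B
    · have hlt : ¬ g < f := by
        intro hlt
        have h := hmin _ hg
        simp only [Lb, leftPos_eq N s k hs] at h
        have h2 := Nat.le_of_mul_le_mul_right h (by omega)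
        exact absurd hlt (not_lt.2 h2)
      have hg' : (g, g) ∈ B.erase (f, f) := mem_erase.2 ⟨by simpa using hgf, hg⟩
      rw [if_neg hlt, resp_mem N s B hat g hg, resp_mem N s _ hat' g hg']
      unfold startTime
      gcongr
      exact erase_subset (f, f) B
    · rw [resp_notMem N s B hat g hg,
        resp_notMem N s _ hat' g (fun h => hg (mem_of_mem_erase h))]
      unfold phase2Start
      split_ifs <;> omega

/-- Assume all files have the same size `k ≥ 1` and exactly one request each. If `B1` is an
optimal schedule consisting solely of atomic mini-batches and `b` is the mini-batch of `B1`
with the smallest leftmost block, then removing `b` does not change the objective value. -/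
theorem stmt17 (k : ℕ) (hk : 1 ≤ k) (hs : ∀ f, s f = k) (hn : ∀ f, n f = 1)
    (B1 : Finset (Fin N × Fin N)) (hopt : Optimal N s n B1)
    (hatomic : ∀ b ∈ B1, b.1 = b.2)
    (b : Fin N × Fin N) (hb : b ∈ B1) (hmin : ∀ b' ∈ B1, Lb N s b ≤ Lb N s b') :
    v N s n (B1.erase b) = v N s n B1 := by
  classical
  obtain ⟨f, f'⟩ := b
  obtain rfl : f = f' := hatomic _ hb
  refine le_antisymm ?_ (hopt.2 _ fun c hc => hopt.1 c (mem_of_mem_erase hc))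
  simp only [v, hn, one_mul]
  have h := sum_le_sum fun g (_ : g ∈ univ) =>
    resp_erase_add_le N s k hk hs B1 hatomic f hb hmin g
  have hlow : ∑ g : Fin N, (if g < f then 2 * k else 0) = 2 * (f * k) := by
    rw [← sum_filter, sum_const, smul_eq_mul, ← Fin.card_Iio f]
    have : univ.filter (fun g => g < f) = Iio f := by ext; simp
    rw [this]
    ring
  rw [sum_add_distrib, sum_add_distrib, hlow, sum_ite_eq' univ f] at h
  simpa using h

end LTSP
end
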